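/- Let (t,u,z) ∈ ℚ³ satisfy (2t−1)⁵(4t²−2t−1)z² = (2u−1)⁵(4u²−2u−1), with a(t,u,z) ≠ 0 and t,u ∉ {0, 1/2, 1}. Then the two cubic polynomials a·(a₀X³ + a₂X² + a₄X + a₆) and a·(a₆X³ + a₄X² + a₂X + a₀) in ℚ[X] (with a, a₀, a₂, a₄, a₆ evaluated at (t,u,z) as in the context) each have degree 3 and are separable; in particular the equations y² = a(a₀x³ + a₂x² + a₄x + a₆) and y² = a(a₆x³ + a₄x² + a₂x + a₀) define elliptic curves over ℚ. -/

import Mathlib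

open Polynomial

/-!
Write `p` and `q` for `twoTorsionSum` and `twoTorsionDiscr`, so that the curve equation reads
`q(t) z² = q(u)`. The elliptic curve `E_t : y² = x³ - p(t) x² + (p(t)² - q(t))/4 · x` is the
universal one with a rational point of order `10`. The abscissas of its 2-torsion points are
`0, (p(t) ± √q(t))/2`; call them `α₁, α₂, α₃`, and let `β₁, β₂, β₃` be those of `E_u`, with
`√q(u) = z √q(t)`. The roots of `a₀X³ + a₂X² + a₄X + a₆` are the three ratios
`(βᵢ - βⱼ)/(αᵢ - αⱼ)`: the cubic is `(X - z)(q(t)(X - z)² - (p(t)X - p(u))²)`, and its discriminant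
is `4 q(t) (p(t) z - p(u))⁶`, where `a = 2 (p(t) z - p(u))`. Reversing the coefficients does not
change the discriminant. The outer coefficients are `(q - p²)(t)` and `-z (q - p²)(u)`, where
`q - p² = -64 x⁵ (x - 1)⁵ (x² - 3x + 1)`. The quadratic factors of `q` and `q - p²` have
discriminants `4 · 5` and `5`, so they have no root in a field in which `5` is not a square.
-/

section Cubic

variable {R K : Type*} [CommRing R] [Field K]

theorem separable_toPoly_iff_discr_ne_zero {P : Cubic K} (ha : P.a ≠ 0) :
    P.toPoly.Separable ↔ P.discr ≠ 0 := by
  have hsplits : (P.toPoly.map (algebraMap K (AlgebraicClosure K))).Splits :=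
    IsAlgClosed.splits _
  rw [← nodup_aroots_iff_of_splits (Cubic.ne_zero_of_a_ne_zero ha) hsplits,
    Cubic.discr_ne_zero_iff_roots_nodup ha hsplits, Cubic.map_roots, aroots_def]

/-- The cubic `k • P`, an equation of the quadratic twist by `k` of the curve `y² = P(x)`. -/
def scaledCubic (k : R) (P : Cubic R) : Cubic R :=
  ⟨k * P.a, k * P.b, k * P.c, k * P.d⟩

/-- The cubic `X³ P(1/X)`, with the coefficients of `P` in the opposite order. -/
def reversedCubic (P : Cubic R) : Cubic R :=
  ⟨P.d, P.c, P.b, P.a⟩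

theorem discr_scaledCubic (k : R) (P : Cubic R) : (scaledCubic k P).discr = k ^ 4 * P.discr := by
  simp only [Cubic.discr, scaledCubic]
  ring

theorem discr_reversedCubic (P : Cubic R) : (reversedCubic P).discr = P.discr := by
  simp only [Cubic.discr, reversedCubic]
  ring

theorem natDegree_and_separable_toPoly_scaledCubic {k : K} {P : Cubic K} (hk : k ≠ 0)
    (ha : P.a ≠ 0) (hdiscr : P.discr ≠ 0) :
    (scaledCubic k P).toPoly.natDegree = 3 ∧ (scaledCubic k P).toPoly.Separable := by
  have hlead : (scaledCubic k P).a ≠ 0 := mul_ne_zero hk ha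
  refine ⟨Cubic.natDegree_of_a_ne_zero hlead, (separable_toPoly_iff_discr_ne_zero hlead).2 ?_⟩
  rw [discr_scaledCubic]
  exact mul_ne_zero (pow_ne_zero 4 hk) hdiscr

/-- The cubic `(X - z)(q(X - z)² - (pX - r)²)` attached to the gluing, along their 2-torsion, of
two elliptic curves with 2-torsion at `0, (p ± √q)/2` and at `0, (r ± z√q)/2`. -/
def gluingCubic (p q r z : R) : Cubic R where
  a := q - p ^ 2
  b := z * (p ^ 2 - 3 * q) + 2 * p * r
  c := 3 * q * z ^ 2 - 2 * p * r * z - r ^ 2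
  d := z * (r ^ 2 - q * z ^ 2)

theorem discr_gluingCubic (p q r z : R) :
    (gluingCubic p q r z).discr = 4 * q * (p * z - r) ^ 6 := by
  simp only [Cubic.discr, gluingCubic]
  ring

end Cubic

section TorsionTen

/-- The sum `p(t)` of the 2-torsion abscissas `0, (p(t) ± √q(t))/2` of the universal elliptic curve
with a point of order `10`; here `q` is `twoTorsionDiscr`. -/
def twoTorsionSum {R : Type*} [CommRing R] (t : R) : R :=
  8 * t ^ 6 - 32 * t ^ 5 + 40 * t ^ 4 - 20 * t ^ 3 + 4 * t - 1

/-- The squared difference `q(t)` of the two nonzero 2-torsion abscissas `(p(t) ± √q(t))/2` of the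
universal elliptic curve with a point of order `10`; here `p` is `twoTorsionSum`. -/
def twoTorsionDiscr {R : Type*} [CommRing R] (t : R) : R :=
  (2 * t - 1) ^ 5 * (4 * t ^ 2 - 2 * t - 1)

theorem twoTorsionDiscr_sub_twoTorsionSum_sq {R : Type*} [CommRing R] (t : R) :
    twoTorsionDiscr t - twoTorsionSum t ^ 2 = -64 * t ^ 5 * (t - 1) ^ 5 * (t ^ 2 - 3 * t + 1) := by
  simp only [twoTorsionDiscr, twoTorsionSum]
  ring

theorem two_ne_zero_of_not_isSquare_five {R : Type*} [CommRing R] (h5 : ¬ IsSquare (5 : R)) :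
    (2 : R) ≠ 0 := fun h2 =>
  h5 ⟨1, by linear_combination 2 * h2⟩

variable {K : Type*} [Field K]

theorem twoTorsionDiscr_ne_zero (h5 : ¬ IsSquare (5 : K)) {t : K} (ht : t ≠ 1 / 2) :
    twoTorsionDiscr t ≠ 0 := by
  have h2 := two_ne_zero_of_not_isSquare_five h5
  have hlinear : 2 * t - 1 ≠ 0 := fun h => ht ((eq_div_iff h2).2 (by linear_combination h))
  have hquadratic : 4 * t ^ 2 - 2 * t - 1 ≠ 0 := fun h =>
    h5 ⟨4 * t - 1, by linear_combination -4 * h⟩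
  exact mul_ne_zero (pow_ne_zero 5 hlinear) hquadratic

theorem twoTorsionDiscr_sub_twoTorsionSum_sq_ne_zero (h5 : ¬ IsSquare (5 : K)) {t : K}
    (ht0 : t ≠ 0) (ht1 : t ≠ 1) : twoTorsionDiscr t - twoTorsionSum t ^ 2 ≠ 0 := by
  have h64 : (-64 : K) ≠ 0 := by
    rw [show (-64 : K) = -2 ^ 6 by norm_num]
    exact neg_ne_zero.2 (pow_ne_zero 6 (two_ne_zero_of_not_isSquare_five h5))
  have hquadratic : t ^ 2 - 3 * t + 1 ≠ 0 := fun h =>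
    h5 ⟨2 * t - 3, by linear_combination -4 * h⟩
  rw [twoTorsionDiscr_sub_twoTorsionSum_sq]
  exact mul_ne_zero (mul_ne_zero (mul_ne_zero h64 (pow_ne_zero 5 ht0))
    (pow_ne_zero 5 (sub_ne_zero.2 ht1))) hquadratic

theorem cubics_degree_three_and_separable_general (h5 : ¬ IsSquare (5 : K)) {t u z k : K}
    (hrel : twoTorsionDiscr t * z ^ 2 = twoTorsionDiscr u) (ht0 : t ≠ 0) (ht1 : t ≠ 1)
    (hu0 : u ≠ 0) (huhalf : u ≠ 1 / 2) (hu1 : u ≠ 1)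
    (hne : twoTorsionSum t * z - twoTorsionSum u ≠ 0) (hk : k ≠ 0) :
    let P := gluingCubic (twoTorsionSum t) (twoTorsionDiscr t) (twoTorsionSum u) z
    ((scaledCubic k P).toPoly.natDegree = 3 ∧ (scaledCubic k P).toPoly.Separable) ∧
      ((scaledCubic k (reversedCubic P)).toPoly.natDegree = 3 ∧
        (scaledCubic k (reversedCubic P)).toPoly.Separable) := by
  intro P
  have hprod : twoTorsionDiscr t * z ^ 2 ≠ 0 := hrel ▸ twoTorsionDiscr_ne_zero h5 huhalf
  have hz : z ≠ 0 := (pow_ne_zero_iff two_ne_zero).1 (right_ne_zero_of_mul hprod)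
  have hlead : P.a ≠ 0 := twoTorsionDiscr_sub_twoTorsionSum_sq_ne_zero h5 ht0 ht1
  have hconst : (reversedCubic P).a ≠ 0 := by
    have hd : (reversedCubic P).a = -z * (twoTorsionDiscr u - twoTorsionSum u ^ 2) := by
      rw [← hrel]
      simp only [P, reversedCubic, gluingCubic]
      ring
    rw [hd]
    exact mul_ne_zero (neg_ne_zero.2 hz)
      (twoTorsionDiscr_sub_twoTorsionSum_sq_ne_zero h5 hu0 hu1)
  have hdiscr : P.discr ≠ 0 := by
    have h4 : (4 : K) ≠ 0 := by
      rw [show (4 : K) = 2 ^ 2 by norm_num]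
      exact pow_ne_zero 2 (two_ne_zero_of_not_isSquare_five h5)
    rw [discr_gluingCubic]
    exact mul_ne_zero (mul_ne_zero h4 (left_ne_zero_of_mul hprod)) (pow_ne_zero 6 hne)
  exact ⟨natDegree_and_separable_toPoly_scaledCubic hk hlead hdiscr,
    natDegree_and_separable_toPoly_scaledCubic hk hconst ((discr_reversedCubic P).symm ▸ hdiscr)⟩

end TorsionTen

set_option maxHeartbeats 1000000 in
/-- Given a solution `(t,u,z)` of `(2t−1)⁵(4t²−2t−1)z² = (2u−1)⁵(4u²−2u−1)` with
`a ≠ 0` and `t, u ∉ {0, 1/2, 1}`, the cubic polynomials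
`a(a₀X³ + a₂X² + a₄X + a₆)` and `a(a₆X³ + a₄X² + a₂X + a₀)` in `ℚ[X]` each have
degree 3 and are separable, so that `y² = a(a₀x³ + a₂x² + a₄x + a₆)` and
`y² = a(a₆x³ + a₄x² + a₂x + a₀)` define elliptic curves over `ℚ`. -/
theorem cubics_degree_three_and_separable (t u z : ℚ)
    (hrel : (2*t - 1)^5 * (4*t^2 - 2*t - 1) * z^2 = (2*u - 1)^5 * (4*u^2 - 2*u - 1))
    (ht0 : t ≠ 0) (hthalf : t ≠ 1/2) (ht1 : t ≠ 1)
    (hu0 : u ≠ 0) (huhalf : u ≠ 1/2) (hu1 : u ≠ 1)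
    (a a0 a2 a4 a6 : ℚ)
    (ha : a = 2*(8*t^6*z - 32*t^5*z + 40*t^4*z - 20*t^3*z + 4*t*z - 8*u^6 + 32*u^5 - 40*u^4 + 20*u^3
      - 4*u - z + 1))
    (ha0 : a0 = -64*t^5*(t - 1)^5*(t^2 - 3*t + 1))
    (ha2 : a2 = 2*(32*t^12*z - 256*t^11*z + 832*t^10*z - 1440*t^9*z + 1440*t^8*z - 960*t^7*z +
      64*t^6*u^6 - 256*t^6*u^5 + 320*t^6*u^4 - 160*t^6*u^3 + 32*t^6*u + 640*t^6*z -
      8*t^6 - 256*t^5*u^6 + 1024*t^5*u^5 - 1280*t^5*u^4 + 640*t^5*u^3 - 128*t^5*u -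
      480*t^5*z + 32*t^5 + 320*t^4*u^6 - 1280*t^4*u^5 + 1600*t^4*u^4 - 800*t^4*u^3 +
      160*t^4*u + 240*t^4*z - 40*t^4 - 160*t^3*u^6 + 640*t^3*u^5 - 800*t^3*u^4 +
      400*t^3*u^3 - 80*t^3*u - 40*t^3*z + 20*t^3 - 16*t^2*z + 32*t*u^6 - 128*t*u^5 +
      160*t*u^4 - 80*t*u^3 + 16*t*u + 8*t*z - 4*t - 8*u^6 + 32*u^5 - 40*u^4 + 20*u^3 -
      4*u - z + 1))
    (ha4 : a4 = 384*t^7*z^2 - 128*t^6*u^6*z + 512*t^6*u^5*z - 640*t^6*u^4*z + 320*t^6*u^3*z -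
      64*t^6*u*z - 1152*t^6*z^2 + 16*t^6*z + 512*t^5*u^6*z - 2048*t^5*u^5*z +
      2560*t^5*u^4*z - 1280*t^5*u^3*z + 256*t^5*u*z + 1344*t^5*z^2 - 64*t^5*z -
      640*t^4*u^6*z + 2560*t^4*u^5*z - 3200*t^4*u^4*z + 1600*t^4*u^3*z - 320*t^4*u*z -
      720*t^4*z^2 + 80*t^4*z + 320*t^3*u^6*z - 1280*t^3*u^5*z + 1600*t^3*u^4*z -
      800*t^3*u^3*z + 160*t^3*u*z + 120*t^3*z^2 - 40*t^3*z + 48*t^2*z^2 - 64*t*u^6*z +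
      256*t*u^5*z - 320*t*u^4*z + 160*t*u^3*z - 32*t*u*z - 24*t*z^2 + 8*t*z - 64*u^12
      + 512*u^11 - 1664*u^10 + 2880*u^9 - 2880*u^8 + 1536*u^7 + 16*u^6*z - 128*u^6 -
      64*u^5*z - 384*u^5 + 80*u^4*z + 240*u^4 - 40*u^3*z - 40*u^3 - 16*u^2 + 8*u*z +
      8*u + 3*z^2 - 2*z - 1)
    (ha6 : a6 = z*(-128*t^7*z^2 + 384*t^6*z^2 - 448*t^5*z^2 + 240*t^4*z^2 - 40*t^3*z^2 - 16*t^2*z^2 +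
      8*t*z^2 + 64*u^12 - 512*u^11 + 1664*u^10 - 2880*u^9 + 2880*u^8 - 1536*u^7 +
      128*u^6 + 384*u^5 - 240*u^4 + 40*u^3 + 16*u^2 - 8*u - z^2 + 1))
    (hane : a ≠ 0) :
    ((C (a * a0) * X^3 + C (a * a2) * X^2 + C (a * a4) * X + C (a * a6)).natDegree = 3 ∧
      (C (a * a0) * X^3 + C (a * a2) * X^2 + C (a * a4) * X + C (a * a6)).Separable) ∧
    ((C (a * a6) * X^3 + C (a * a4) * X^2 + C (a * a2) * X + C (a * a0)).natDegree = 3 ∧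
      (C (a * a6) * X^3 + C (a * a4) * X^2 + C (a * a2) * X + C (a * a0)).Separable) := by
  have hcoeffs : gluingCubic (twoTorsionSum t) (twoTorsionDiscr t) (twoTorsionSum u) z =
      ⟨a0, a2, a4, a6⟩ := by
    ext <;> simp only [gluingCubic, twoTorsionSum, twoTorsionDiscr, ha0, ha2, ha4, ha6] <;> ring
  have hfactor : a = 2 * (twoTorsionSum t * z - twoTorsionSum u) := by
    simp only [ha, twoTorsionSum]
    ring
  have hcubics := cubics_degree_three_and_separable_general (by norm_num) hrel ht0 ht1 hu0 huhalf
    hu1 (right_ne_zero_of_mul (hfactor ▸ hane)) hane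
  rw [hcoeffs] at hcubics
  exact hcubics
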